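/- Let n ≥ 0 and let κ = (κ_1,…,κ_ℓ) ∈ Z^ℓ satisfy κ_l − κ_{l+1} > n for 1 ≤ l < ℓ. Let λ be an ℓ-multipartition of n and let s, t ∈ Std(λ) with t = s(r,r+1) for some 1 ≤ r < n and s ⊳ t. Set ρ_r(u) = c_r(u) − c_{r+1}(u). Then in the field Q(t) of rational functions: ([1+ρ_r(s)]_t · [1+ρ_r(t)]_t) / ([ρ_r(s)]_t · [ρ_r(t)]_t) = t · ∏_{e≥2} Φ_e(t)^{d_e}, where for each integer e ≥ 2 the exponent d_e is determined by the residues i = res_s(r) and j = res_s(r+1) modulo e as follows: d_e = −2 if i = j; d_e = 2 if e = 2 and j = i+1; d_e = 1 if e > 2 and (j = i+1 or i = j+1); and d_e = 0 otherwise. Moreover d_e = deg_e(t) − deg_e(s), so the left-hand side equals t · ∏_{e≥2} Φ_e(t)^{deg_e(t) − deg_e(s)}. -/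

import Mathlib

open scoped BigOperators
open scoped Classical

namespace Paper

/-! ## Quantum integers -/

/-- The quantum integer `[d]_x` in a field, for `d ∈ ℤ`. -/
noncomputable def qint {K : Type*} [Field K] (x : K) (d : ℤ) : K :=
  if 0 ≤ d then ∑ k ∈ Finset.range d.toNat, x ^ k
  else -∑ k ∈ Finset.range (-d).toNat, x ^ (-((k : ℤ) + 1))

/-- The quantum integer `[d]_t` in a commutative ring, for an invertible `t` and `d ∈ ℤ`. -/
def qintU {O : Type*} [CommRing O] (t : Oˣ) (d : ℤ) : O :=
  if 0 ≤ d then ∑ k ∈ Finset.range d.toNat, (t : O) ^ k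
  else -∑ k ∈ Finset.range (-d).toNat, ((t ^ (-((k : ℤ) + 1)) : Oˣ) : O)

/-! ## Nodes, multipartitions and standard tableaux -/

/-- A node `(l, r, c)`: component `l`, row `r`, column `c` (all `0`-based). -/
abbrev Node : Type := ℕ × ℕ × ℕ

/-- `nodeBelow A B` holds when `B` is strictly below `A`, i.e. `A < B` lexicographically. -/
def nodeBelow (A B : Node) : Prop :=
  A.1 < B.1 ∨ (A.1 = B.1 ∧ (A.2.1 < B.2.1 ∨ (A.2.1 = B.2.1 ∧ A.2.2 < B.2.2)))

/-- An `ℓ`-multipartition of `n`. -/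
structure Multipartition (ℓ n : ℕ) : Type where
  part : ℕ → ℕ → ℕ
  comp_bound : ∀ l, ℓ ≤ l → ∀ r, part l r = 0
  antitone : ∀ l, Antitone (part l)
  row_bound : ∀ l r, n ≤ r → part l r = 0
  size : (∑ l ∈ Finset.range ℓ, ∑ r ∈ Finset.range n, part l r) = n

/-- The diagram of a multipartition. -/
def Multipartition.diagram {ℓ n : ℕ} (μ : Multipartition ℓ n) : Set Node :=
  {A | A.2.2 < μ.part A.1 A.2.1}

/-- A standard tableau: a bijection from the diagram of its shape onto `{1, …, n}`
that increases along rows and down columns of each component (it takes the value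
`0` off the diagram, so that it is determined by its entries). -/
structure StdTableau (ℓ n : ℕ) : Type where
  shape : Multipartition ℓ n
  entry : Node → ℕ
  entry_zero : ∀ A, A ∉ shape.diagram → entry A = 0
  bijOn : Set.BijOn entry shape.diagram (Set.Icc 1 n)
  row_inc : ∀ l r c, (l, r, c + 1) ∈ shape.diagram → entry (l, r, c) < entry (l, r, c + 1)
  col_inc : ∀ l r c, (l, r + 1, c) ∈ shape.diagram → entry (l, r, c) < entry (l, r + 1, c)

/-- The node of a standard tableau containing the entry `k`. -/
noncomputable def StdTableau.node {ℓ n : ℕ} (T : StdTableau ℓ n) (k : ℕ) : Node :=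
  Function.invFunOn T.entry T.shape.diagram k

/-- The content `c_k(T) = κ_l + c - r` of the entry `k` in the tableau `T`
(`1 ≤ k ≤ n`). -/
noncomputable def content {ℓ n : ℕ} (κ : ℕ → ℤ) (T : StdTableau ℓ n) (k : ℕ) : ℤ :=
  κ (T.node k).1 + ((T.node k).2.2 : ℤ) - ((T.node k).2.1 : ℤ)

/-- The residue sequence of a standard tableau, in `I^n` with `I = ℤ/eℤ`. -/
noncomputable def resSeq {ℓ n : ℕ} (e : ℕ) (κ : ℕ → ℤ) (T : StdTableau ℓ n) :
    Fin n → ZMod e :=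
  fun k => ((content κ T (k.1 + 1) : ℤ) : ZMod e)

/-- The residue of a node. -/
def resNode (e : ℕ) (κ : ℕ → ℤ) (A : Node) : ZMod e :=
  ((κ A.1 + (A.2.2 : ℤ) - (A.2.1 : ℤ) : ℤ) : ZMod e)

/-- A set of nodes is the diagram of a multipartition (with at most `ℓ` components)
iff it is finite and downward closed in rows and columns. -/
def IsDiagramSet (ℓ : ℕ) (S : Set Node) : Prop :=
  S.Finite ∧ (∀ A ∈ S, A.1 < ℓ) ∧
    (∀ l r c, (l, r, c + 1) ∈ S → (l, r, c) ∈ S) ∧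
    (∀ l r c, (l, r + 1, c) ∈ S → (l, r, c) ∈ S)

/-- `A` is an addable node of the diagram `S`. -/
def Addable (ℓ : ℕ) (S : Set Node) (A : Node) : Prop :=
  A ∉ S ∧ IsDiagramSet ℓ (S ∪ {A})

/-- `A` is a removable node of the diagram `S`. -/
def Removable (ℓ : ℕ) (S : Set Node) (A : Node) : Prop :=
  A ∈ S ∧ IsDiagramSet ℓ (S \ {A})

/-- `d_A(S)`: the number of addable nodes of `S` of the same residue as `A` strictly
below `A`, minus the number of removable ones. -/
noncomputable def dNode (ℓ e : ℕ) (κ : ℕ → ℤ) (S : Set Node) (A : Node) : ℤ :=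
  (Set.ncard {B | Addable ℓ S B ∧ resNode e κ B = resNode e κ A ∧ nodeBelow A B} : ℤ) -
    (Set.ncard {B | Removable ℓ S B ∧ resNode e κ B = resNode e κ A ∧ nodeBelow A B} : ℤ)

/-- The Brundan–Kleshchev–Wang degree `deg_e(T)` of a standard tableau, written as the
telescoping sum of the recursion `deg_e(T) = deg_e(T↓(n-1)) + d_A(Shape(T))`. -/
noncomputable def degE {ℓ n : ℕ} (e : ℕ) (κ : ℕ → ℤ) (T : StdTableau ℓ n) : ℤ :=
  ∑ m ∈ Finset.Icc 1 n,
    dNode ℓ e κ {A | A ∈ T.shape.diagram ∧ T.entry A ≤ m} (T.node m)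

/-- The restriction of the diagram of `T` to entries `≤ m` (the diagram of `Shape(T↓m)`). -/
def restDiag {ℓ n : ℕ} (T : StdTableau ℓ n) (m : ℕ) : Set Node :=
  {A | A ∈ T.shape.diagram ∧ T.entry A ≤ m}

/-- Dominance order on standard tableaux: `domTab S T` iff `S ⊵ T`. -/
def domTab {ℓ n : ℕ} (S T : StdTableau ℓ n) : Prop :=
  ∀ m l i : ℕ,
    Set.ncard {A | A ∈ restDiag T m ∧ (A.1 < l ∨ (A.1 = l ∧ A.2.1 ≤ i))} ≤
      Set.ncard {A | A ∈ restDiag S m ∧ (A.1 < l ∨ (A.1 = l ∧ A.2.1 ≤ i))}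

/-- Interchange the entries `r` and `r + 1` in an entry function. -/
def swapEntry (f : Node → ℕ) (r : ℕ) : Node → ℕ :=
  fun A => if f A = r then r + 1 else if f A = r + 1 then r else f A

/-- `ρ_r(T) = c_r(T) - c_{r+1}(T)`, the axial distance. -/
noncomputable def rhoTab {ℓ n : ℕ} (κ : ℕ → ℤ) (T : StdTableau ℓ n) (r : ℕ) : ℤ :=
  content κ T r - content κ T (r + 1)

/-- The entry function of the row-reading initial tableau `t^λ`. -/
noncomputable def tlamEntry {ℓ n : ℕ} (μ : Multipartition ℓ n) (A : Node) : ℕ :=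
  if A ∈ μ.diagram then
    (∑ l ∈ Finset.range A.1, ∑ r ∈ Finset.range n, μ.part l r) +
      (∑ r ∈ Finset.range A.2.1, μ.part A.1 r) + A.2.2 + 1
  else 0

/-- The finite set of possible contents of standard tableaux of size `n`. -/
noncomputable def contFinset (ℓ n : ℕ) (κ : ℕ → ℤ) : Finset ℤ :=
  ((Finset.range ℓ ×ˢ Finset.range n ×ˢ Finset.range n).image
      (fun x => κ x.1 + (x.2.2 : ℤ) - (x.2.1 : ℤ))).filter
    (fun c => ∃ T : StdTableau ℓ n, ∃ k, 1 ≤ k ∧ k ≤ n ∧ content κ T k = c)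

/-- The standard tableau (if any) obtained from `T` by interchanging the entries
`r` and `r + 1`; i.e. `T·s_r` if it is standard, and `none` otherwise. -/
noncomputable def oSwapO {ℓ n : ℕ} (T : StdTableau ℓ n) (r : ℕ) :
    Option (StdTableau ℓ n) :=
  if h : ∃ V : StdTableau ℓ n, V.entry = swapEntry T.entry r then some (Classical.choose h)
  else none

/-- `oSwap` extended to `Option`. -/
noncomputable def oSwap {ℓ n : ℕ} (X : Option (StdTableau ℓ n)) (r : ℕ) :
    Option (StdTableau ℓ n) :=
  X.bind fun T => oSwapO T r

/-- Evaluate a seminormal coefficient system on an optional tableau (by `0` if none). -/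
noncomputable def aE {ℓ n : ℕ} {K : Type*} [Field K] (α : ℕ → StdTableau ℓ n → K) (r : ℕ)
    (X : Option (StdTableau ℓ n)) : K :=
  X.elim 0 (α r)

/-! ## Separation and idempotent subrings -/

/-- `(K, t)` separates `Std(P_n)` (field version):
`[n]!_t ∏_{1 ≤ l < m ≤ ℓ} ∏_{-n < d < n} [κ_l - κ_m + d]_t ≠ 0`. -/
def SeparatesF {K : Type*} [Field K] (t : Kˣ) (n ℓ : ℕ) (κ : ℕ → ℤ) : Prop :=
  ((∏ d ∈ Finset.Icc 1 n, qint (t : K) (d : ℤ)) *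
      ∏ l ∈ Finset.range ℓ, ∏ m ∈ Finset.Ioo l ℓ,
        ∏ d ∈ Finset.Ioo (-(n : ℤ)) (n : ℤ), qint (t : K) (κ l - κ m + d)) ≠ 0

/-- `(O, t)` separates `Std(P_n)` (subring version): the separation element is a unit. -/
def SeparatesU {O : Type*} [CommRing O] (t : Oˣ) (n ℓ : ℕ) (κ : ℕ → ℤ) : Prop :=
  IsUnit ((∏ d ∈ Finset.Icc 1 n, qintU t (d : ℤ)) *
      ∏ l ∈ Finset.range ℓ, ∏ m ∈ Finset.Ioo l ℓ,
        ∏ d ∈ Finset.Ioo (-(n : ℤ)) (n : ℤ), qintU t (κ l - κ m + d))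

/-- `(O, t)` is an `e`-idempotent subring of the field `K`. -/
def IsIdempotentSubring {K : Type*} [Field K] (O : Subring K) (t : Oˣ) (e n ℓ : ℕ)
    (κ : ℕ → ℤ) : Prop :=
  SeparatesU t n ℓ κ ∧
    (∀ k : ℤ, ¬(e : ℤ) ∣ k → IsUnit (qintU t k)) ∧
    (∀ k : ℤ, (e : ℤ) ∣ k → qintU t k ∈ Ideal.jacobson (⊥ : Ideal O))

/-! ## The cyclotomic Hecke algebra, by generators and relations -/

/-- Generators `L_1, …, L_n`, `T_1, …, T_{n-1}` (here `0`-based). -/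
inductive HeckeGen (n : ℕ) : Type
  | L : Fin n → HeckeGen n
  | T : Fin (n - 1) → HeckeGen n

/-- The position `r` of the pair `(r, r+1)` interchanged by the `r`-th transposition. -/
def pL {n : ℕ} (r : Fin (n - 1)) : Fin n := ⟨r.1, by have := r.2; omega⟩

/-- The position `r + 1` of the pair interchanged by the `r`-th transposition. -/
def pR {n : ℕ} (r : Fin (n - 1)) : Fin n := ⟨r.1 + 1, by have := r.2; omega⟩

/-- The position `r + 2`, used in braid relations. -/
def pM {n : ℕ} (r : Fin (n - 1)) (hr : r.1 + 1 < n - 1) : Fin n := ⟨r.1 + 2, by omega⟩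

/-- The free algebra generator `L_k`. -/
def hL (R : Type*) [CommRing R] {n : ℕ} (k : Fin n) : FreeAlgebra R (HeckeGen n) :=
  FreeAlgebra.ι R (HeckeGen.L k)

/-- The free algebra generator `T_r`. -/
def hT (R : Type*) [CommRing R] {n : ℕ} (r : Fin (n - 1)) : FreeAlgebra R (HeckeGen n) :=
  FreeAlgebra.ι R (HeckeGen.T r)

/-- The defining relations of the integral cyclotomic Hecke algebra `H_n(R, t, κ)`. -/
inductive HeckeRel (R : Type*) [CommRing R] (t : Rˣ) (n ℓ : ℕ) (κ : ℕ → ℤ) :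
    FreeAlgebra R (HeckeGen n) → FreeAlgebra R (HeckeGen n) → Prop
  | cyc (h : 0 < n) :
      HeckeRel R t n ℓ κ
        (((List.range ℓ).map fun l =>
          hL R (⟨0, h⟩ : Fin n) - algebraMap R _ (qintU t (κ l))).prod) 0
  | quad (r : Fin (n - 1)) :
      HeckeRel R t n ℓ κ ((hT R r + 1) * (hT R r - algebraMap R _ (t : R))) 0
  | LL (k m : Fin n) : HeckeRel R t n ℓ κ (hL R k * hL R m) (hL R m * hL R k)
  | TTfar (r s : Fin (n - 1)) (h : r.1 + 1 < s.1 ∨ s.1 + 1 < r.1) :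
      HeckeRel R t n ℓ κ (hT R r * hT R s) (hT R s * hT R r)
  | braid (r s : Fin (n - 1)) (h : s.1 = r.1 + 1) :
      HeckeRel R t n ℓ κ (hT R r * hT R s * hT R r) (hT R s * hT R r * hT R s)
  | TL (r : Fin (n - 1)) (k : Fin n) (h : k.1 ≠ r.1 ∧ k.1 ≠ r.1 + 1) :
      HeckeRel R t n ℓ κ (hT R r * hL R k) (hL R k * hT R r)
  | LT (r : Fin (n - 1)) :
      HeckeRel R t n ℓ κ (hL R (pR r) * (hT R r - algebraMap R _ (t : R) + 1))
        (hT R r * hL R (pL r) + 1)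

/-- The integral cyclotomic Hecke algebra of type `A`, `H_n(R, t, κ)`. -/
noncomputable abbrev CycHecke (R : Type*) [CommRing R] (t : Rˣ) (n ℓ : ℕ) (κ : ℕ → ℤ) :
    Type _ :=
  RingQuot (HeckeRel R t n ℓ κ)

/-- The generator `L_k` of the cyclotomic Hecke algebra. -/
noncomputable def Lgen (R : Type*) [CommRing R] (t : Rˣ) (n ℓ : ℕ) (κ : ℕ → ℤ)
    (k : Fin n) : CycHecke R t n ℓ κ :=
  RingQuot.mkAlgHom R (HeckeRel R t n ℓ κ) (hL R k)

/-- The generator `T_r` of the cyclotomic Hecke algebra. -/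
noncomputable def Tgen (R : Type*) [CommRing R] (t : Rˣ) (n ℓ : ℕ) (κ : ℕ → ℤ)
    (r : Fin (n - 1)) : CycHecke R t n ℓ κ :=
  RingQuot.mkAlgHom R (HeckeRel R t n ℓ κ) (hT R r)

end Paper
/-! ## Quiver Hecke (KLR) algebras, by generators and relations -/

namespace Paper

/-- Generators `e(i)` (`i ∈ I^n`), `ψ_1, …, ψ_{n-1}`, `y_1, …, y_n` (here `0`-based). -/
inductive KLRGen (n e : ℕ) : Type
  | idem : (Fin n → ZMod e) → KLRGen n e
  | psi : Fin (n - 1) → KLRGen n e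
  | y : Fin n → KLRGen n e

/-- The free algebra generator `e(i)`. -/
def kE (R : Type*) [CommRing R] {n e : ℕ} (i : Fin n → ZMod e) :
    FreeAlgebra R (KLRGen n e) :=
  FreeAlgebra.ι R (KLRGen.idem i)

/-- The free algebra generator `ψ_r`. -/
def kPsi (R : Type*) [CommRing R] {n e : ℕ} (r : Fin (n - 1)) :
    FreeAlgebra R (KLRGen n e) :=
  FreeAlgebra.ι R (KLRGen.psi r)

/-- The free algebra generator `y_k`. -/
def kY (R : Type*) [CommRing R] {n e : ℕ} (k : Fin n) : FreeAlgebra R (KLRGen n e) :=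
  FreeAlgebra.ι R (KLRGen.y k)

/-- `s_r · i`: interchange the entries of `i` at positions `r` and `r + 1`. -/
def swapSeq {n e : ℕ} (i : Fin n → ZMod e) (r : Fin (n - 1)) : Fin n → ZMod e :=
  fun k => if k = pL r then i (pR r) else if k = pR r then i (pL r) else i k

/-- The defining relations of the cyclotomic quiver Hecke algebra `R_n^Λ(R)` where
`Λ = Σ_l Λ_{κ_l mod e}`. -/
inductive KLRRel (R : Type*) [CommRing R] (n e ℓ : ℕ) [NeZero e] (κ : ℕ → ℤ) :
    FreeAlgebra R (KLRGen n e) → FreeAlgebra R (KLRGen n e) → Prop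
  | cyc (h : 0 < n) (i : Fin n → ZMod e) :
      KLRRel R n e ℓ κ
        ((kY R (⟨0, h⟩ : Fin n)) ^
            (((Finset.range ℓ).filter fun l => ((κ l : ZMod e) = i ⟨0, h⟩)).card) *
          kE R i) 0
  | orth (i j : Fin n → ZMod e) (h : i ≠ j) : KLRRel R n e ℓ κ (kE R i * kE R j) 0
  | idem (i : Fin n → ZMod e) : KLRRel R n e ℓ κ (kE R i * kE R i) (kE R i)
  | complete : KLRRel R n e ℓ κ (∑ i : Fin n → ZMod e, kE R i) 1
  | yE (k : Fin n) (i : Fin n → ZMod e) :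
      KLRRel R n e ℓ κ (kY R k * kE R i) (kE R i * kY R k)
  | psiE (r : Fin (n - 1)) (i : Fin n → ZMod e) :
      KLRRel R n e ℓ κ (kPsi R r * kE R i) (kE R (swapSeq i r) * kPsi R r)
  | yy (k m : Fin n) : KLRRel R n e ℓ κ (kY R k * kY R m) (kY R m * kY R k)
  | psiyEq (r : Fin (n - 1)) (i : Fin n → ZMod e) (h : i (pL r) = i (pR r)) :
      KLRRel R n e ℓ κ (kPsi R r * kY R (pR r) * kE R i)
        ((kY R (pL r) * kPsi R r + 1) * kE R i)
  | psiyNe (r : Fin (n - 1)) (i : Fin n → ZMod e) (h : i (pL r) ≠ i (pR r)) :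
      KLRRel R n e ℓ κ (kPsi R r * kY R (pR r) * kE R i)
        (kY R (pL r) * kPsi R r * kE R i)
  | ypsiEq (r : Fin (n - 1)) (i : Fin n → ZMod e) (h : i (pL r) = i (pR r)) :
      KLRRel R n e ℓ κ (kY R (pR r) * kPsi R r * kE R i)
        ((kPsi R r * kY R (pL r) + 1) * kE R i)
  | ypsiNe (r : Fin (n - 1)) (i : Fin n → ZMod e) (h : i (pL r) ≠ i (pR r)) :
      KLRRel R n e ℓ κ (kY R (pR r) * kPsi R r * kE R i)
        (kPsi R r * kY R (pL r) * kE R i)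
  | psiyFar (r : Fin (n - 1)) (k : Fin n) (h : k.1 ≠ r.1 ∧ k.1 ≠ r.1 + 1) :
      KLRRel R n e ℓ κ (kPsi R r * kY R k) (kY R k * kPsi R r)
  | psipsiFar (r s : Fin (n - 1)) (h : r.1 + 1 < s.1 ∨ s.1 + 1 < r.1) :
      KLRRel R n e ℓ κ (kPsi R r * kPsi R s) (kPsi R s * kPsi R r)
  | quadEq (r : Fin (n - 1)) (i : Fin n → ZMod e) (h : i (pL r) = i (pR r)) :
      KLRRel R n e ℓ κ (kPsi R r ^ 2 * kE R i) 0
  | quadR (r : Fin (n - 1)) (i : Fin n → ZMod e)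
      (h1 : i (pR r) = i (pL r) + 1) (h2 : i (pL r) ≠ i (pR r) + 1) :
      KLRRel R n e ℓ κ (kPsi R r ^ 2 * kE R i) ((kY R (pL r) - kY R (pR r)) * kE R i)
  | quadL (r : Fin (n - 1)) (i : Fin n → ZMod e)
      (h1 : i (pL r) = i (pR r) + 1) (h2 : i (pR r) ≠ i (pL r) + 1) :
      KLRRel R n e ℓ κ (kPsi R r ^ 2 * kE R i) ((kY R (pR r) - kY R (pL r)) * kE R i)
  | quadBoth (r : Fin (n - 1)) (i : Fin n → ZMod e)
      (h1 : i (pR r) = i (pL r) + 1) (h2 : i (pL r) = i (pR r) + 1) :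
      KLRRel R n e ℓ κ (kPsi R r ^ 2 * kE R i)
        ((kY R (pR r) - kY R (pL r)) * (kY R (pL r) - kY R (pR r)) * kE R i)
  | quadNone (r : Fin (n - 1)) (i : Fin n → ZMod e) (h1 : i (pL r) ≠ i (pR r))
      (h2 : i (pR r) ≠ i (pL r) + 1) (h3 : i (pL r) ≠ i (pR r) + 1) :
      KLRRel R n e ℓ κ (kPsi R r ^ 2 * kE R i) (kE R i)
  | braidR (r : Fin (n - 1)) (hr : r.1 + 1 < n - 1) (i : Fin n → ZMod e)
      (h0 : i (pM r hr) = i (pL r)) (h1 : i (pR r) = i (pL r) + 1)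
      (h2 : i (pL r) ≠ i (pR r) + 1) :
      KLRRel R n e ℓ κ (kPsi R r * kPsi R ⟨r.1 + 1, hr⟩ * kPsi R r * kE R i)
        ((kPsi R ⟨r.1 + 1, hr⟩ * kPsi R r * kPsi R ⟨r.1 + 1, hr⟩ - 1) * kE R i)
  | braidL (r : Fin (n - 1)) (hr : r.1 + 1 < n - 1) (i : Fin n → ZMod e)
      (h0 : i (pM r hr) = i (pL r)) (h1 : i (pL r) = i (pR r) + 1)
      (h2 : i (pR r) ≠ i (pL r) + 1) :
      KLRRel R n e ℓ κ (kPsi R r * kPsi R ⟨r.1 + 1, hr⟩ * kPsi R r * kE R i)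
        ((kPsi R ⟨r.1 + 1, hr⟩ * kPsi R r * kPsi R ⟨r.1 + 1, hr⟩ + 1) * kE R i)
  | braidBoth (r : Fin (n - 1)) (hr : r.1 + 1 < n - 1) (i : Fin n → ZMod e)
      (h0 : i (pM r hr) = i (pL r)) (h1 : i (pR r) = i (pL r) + 1)
      (h2 : i (pL r) = i (pR r) + 1) :
      KLRRel R n e ℓ κ (kPsi R r * kPsi R ⟨r.1 + 1, hr⟩ * kPsi R r * kE R i)
        ((kPsi R ⟨r.1 + 1, hr⟩ * kPsi R r * kPsi R ⟨r.1 + 1, hr⟩ +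
            kY R (pL r) - 2 * kY R (pR r) + kY R (pM r hr)) * kE R i)
  | braidNone (r : Fin (n - 1)) (hr : r.1 + 1 < n - 1) (i : Fin n → ZMod e)
      (h : ¬(i (pM r hr) = i (pL r) ∧
        (i (pR r) = i (pL r) + 1 ∨ i (pL r) = i (pR r) + 1))) :
      KLRRel R n e ℓ κ (kPsi R r * kPsi R ⟨r.1 + 1, hr⟩ * kPsi R r * kE R i)
        (kPsi R ⟨r.1 + 1, hr⟩ * kPsi R r * kPsi R ⟨r.1 + 1, hr⟩ * kE R i)

/-- The cyclotomic quiver Hecke algebra `R_n^Λ(R)`, `Λ = Σ_l Λ_{κ_l mod e}`. -/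
noncomputable abbrev KLR (R : Type*) [CommRing R] (n e ℓ : ℕ) [NeZero e] (κ : ℕ → ℤ) :
    Type _ :=
  RingQuot (KLRRel R n e ℓ κ)

/-- The generator `e(i)` of the cyclotomic quiver Hecke algebra. -/
noncomputable def KeGen (R : Type*) [CommRing R] (n e ℓ : ℕ) [NeZero e] (κ : ℕ → ℤ)
    (i : Fin n → ZMod e) : KLR R n e ℓ κ :=
  RingQuot.mkAlgHom R (KLRRel R n e ℓ κ) (kE R i)

/-- The generator `ψ_r` of the cyclotomic quiver Hecke algebra. -/
noncomputable def KpsiGen (R : Type*) [CommRing R] (n e ℓ : ℕ) [NeZero e] (κ : ℕ → ℤ)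
    (r : Fin (n - 1)) : KLR R n e ℓ κ :=
  RingQuot.mkAlgHom R (KLRRel R n e ℓ κ) (kPsi R r)

/-- The generator `y_k` of the cyclotomic quiver Hecke algebra. -/
noncomputable def KyGen (R : Type*) [CommRing R] (n e ℓ : ℕ) [NeZero e] (κ : ℕ → ℤ)
    (k : Fin n) : KLR R n e ℓ κ :=
  RingQuot.mkAlgHom R (KLRRel R n e ℓ κ) (kY R k)

end Paper
/-! ## The deformed cyclotomic quiver Hecke algebra -/

namespace Paper

/-- `y_k^⟨d⟩ = t^d y_k + [d]_t` in the free algebra. -/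
def ydot (R : Type*) [CommRing R] (t : Rˣ) {n e : ℕ} (d : ℤ) (k : Fin n) :
    FreeAlgebra R (KLRGen n e) :=
  algebraMap R _ ((t ^ d : Rˣ) : R) * kY R k + algebraMap R _ (qintU t d)

/-- `ρ_r(i) = î_r - î_{r+1}` for `i ∈ I^n`. -/
def rhoI {n e : ℕ} (i : Fin n → ZMod e) (r : Fin (n - 1)) : ℤ :=
  ((i (pL r)).val : ℤ) - ((i (pR r)).val : ℤ)

/-- The defining relations of the deformed cyclotomic quiver Hecke algebra `R_n(O)`. -/
inductive DefKLRRel (R : Type*) [CommRing R] (t : Rˣ) (n e ℓ : ℕ) [NeZero e] (κ : ℕ → ℤ) :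
    FreeAlgebra R (KLRGen n e) → FreeAlgebra R (KLRGen n e) → Prop
  | cyc (h : 0 < n) (i : Fin n → ZMod e) :
      DefKLRRel R t n e ℓ κ
        ((((List.range ℓ).map fun l =>
            if ((κ l : ZMod e) = i ⟨0, h⟩) then
              kY R (⟨0, h⟩ : Fin n) -
                algebraMap R _ (qintU t (κ l - ((i ⟨0, h⟩).val : ℤ)))
            else 1).prod) * kE R i) 0
  | orth (i j : Fin n → ZMod e) (h : i ≠ j) : DefKLRRel R t n e ℓ κ (kE R i * kE R j) 0
  | idem (i : Fin n → ZMod e) : DefKLRRel R t n e ℓ κ (kE R i * kE R i) (kE R i)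
  | complete : DefKLRRel R t n e ℓ κ (∑ i : Fin n → ZMod e, kE R i) 1
  | yE (k : Fin n) (i : Fin n → ZMod e) :
      DefKLRRel R t n e ℓ κ (kY R k * kE R i) (kE R i * kY R k)
  | psiE (r : Fin (n - 1)) (i : Fin n → ZMod e) :
      DefKLRRel R t n e ℓ κ (kPsi R r * kE R i) (kE R (swapSeq i r) * kPsi R r)
  | yy (k m : Fin n) : DefKLRRel R t n e ℓ κ (kY R k * kY R m) (kY R m * kY R k)
  | psiyEq (r : Fin (n - 1)) (i : Fin n → ZMod e) (h : i (pL r) = i (pR r)) :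
      DefKLRRel R t n e ℓ κ (kPsi R r * kY R (pR r) * kE R i)
        ((kY R (pL r) * kPsi R r + 1) * kE R i)
  | psiyNe (r : Fin (n - 1)) (i : Fin n → ZMod e) (h : i (pL r) ≠ i (pR r)) :
      DefKLRRel R t n e ℓ κ (kPsi R r * kY R (pR r) * kE R i)
        (kY R (pL r) * kPsi R r * kE R i)
  | ypsiEq (r : Fin (n - 1)) (i : Fin n → ZMod e) (h : i (pL r) = i (pR r)) :
      DefKLRRel R t n e ℓ κ (kY R (pR r) * kPsi R r * kE R i)
        ((kPsi R r * kY R (pL r) + 1) * kE R i)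
  | ypsiNe (r : Fin (n - 1)) (i : Fin n → ZMod e) (h : i (pL r) ≠ i (pR r)) :
      DefKLRRel R t n e ℓ κ (kY R (pR r) * kPsi R r * kE R i)
        (kPsi R r * kY R (pL r) * kE R i)
  | psiyFar (r : Fin (n - 1)) (k : Fin n) (h : k.1 ≠ r.1 ∧ k.1 ≠ r.1 + 1) :
      DefKLRRel R t n e ℓ κ (kPsi R r * kY R k) (kY R k * kPsi R r)
  | psipsiFar (r s : Fin (n - 1)) (h : r.1 + 1 < s.1 ∨ s.1 + 1 < r.1) :
      DefKLRRel R t n e ℓ κ (kPsi R r * kPsi R s) (kPsi R s * kPsi R r)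
  | quadEq (r : Fin (n - 1)) (i : Fin n → ZMod e) (h : i (pL r) = i (pR r)) :
      DefKLRRel R t n e ℓ κ (kPsi R r ^ 2 * kE R i) 0
  | quadR (r : Fin (n - 1)) (i : Fin n → ZMod e)
      (h1 : i (pR r) = i (pL r) + 1) (h2 : i (pL r) ≠ i (pR r) + 1) :
      DefKLRRel R t n e ℓ κ (kPsi R r ^ 2 * kE R i)
        ((ydot R t (1 + rhoI i r) (pL r) - kY R (pR r)) * kE R i)
  | quadL (r : Fin (n - 1)) (i : Fin n → ZMod e)
      (h1 : i (pL r) = i (pR r) + 1) (h2 : i (pR r) ≠ i (pL r) + 1) :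
      DefKLRRel R t n e ℓ κ (kPsi R r ^ 2 * kE R i)
        ((ydot R t (1 - rhoI i r) (pR r) - kY R (pL r)) * kE R i)
  | quadBoth (r : Fin (n - 1)) (i : Fin n → ZMod e)
      (h1 : i (pR r) = i (pL r) + 1) (h2 : i (pL r) = i (pR r) + 1) :
      DefKLRRel R t n e ℓ κ (kPsi R r ^ 2 * kE R i)
        ((ydot R t (1 + rhoI i r) (pL r) - kY R (pR r)) *
          (ydot R t (1 - rhoI i r) (pR r) - kY R (pL r)) * kE R i)
  | quadNone (r : Fin (n - 1)) (i : Fin n → ZMod e) (h1 : i (pL r) ≠ i (pR r))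
      (h2 : i (pR r) ≠ i (pL r) + 1) (h3 : i (pL r) ≠ i (pR r) + 1) :
      DefKLRRel R t n e ℓ κ (kPsi R r ^ 2 * kE R i) (kE R i)
  | braidBoth (r : Fin (n - 1)) (hr : r.1 + 1 < n - 1) (i : Fin n → ZMod e)
      (h0 : i (pM r hr) = i (pL r)) (h1 : i (pR r) = i (pL r) + 1)
      (h2 : i (pL r) = i (pR r) + 1) :
      DefKLRRel R t n e ℓ κ
        ((kPsi R r * kPsi R ⟨r.1 + 1, hr⟩ * kPsi R r -
            kPsi R ⟨r.1 + 1, hr⟩ * kPsi R r * kPsi R ⟨r.1 + 1, hr⟩) * kE R i)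
        ((ydot R t (1 + rhoI i r) (pL r) + ydot R t (1 + rhoI i r) (pM r hr) -
            ydot R t (1 + rhoI i r) (pR r) - ydot R t (1 - rhoI i r) (pR r)) * kE R i)
  | braidR (r : Fin (n - 1)) (hr : r.1 + 1 < n - 1) (i : Fin n → ZMod e)
      (h0 : i (pM r hr) = i (pL r)) (h1 : i (pR r) = i (pL r) + 1)
      (h2 : i (pL r) ≠ i (pR r) + 1) :
      DefKLRRel R t n e ℓ κ
        ((kPsi R r * kPsi R ⟨r.1 + 1, hr⟩ * kPsi R r -
            kPsi R ⟨r.1 + 1, hr⟩ * kPsi R r * kPsi R ⟨r.1 + 1, hr⟩) * kE R i)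
        (algebraMap R _ (-(((t ^ (1 + rhoI i r) : Rˣ) : R))) * kE R i)
  | braidL (r : Fin (n - 1)) (hr : r.1 + 1 < n - 1) (i : Fin n → ZMod e)
      (h0 : i (pM r hr) = i (pL r)) (h1 : i (pL r) = i (pR r) + 1)
      (h2 : i (pR r) ≠ i (pL r) + 1) :
      DefKLRRel R t n e ℓ κ
        ((kPsi R r * kPsi R ⟨r.1 + 1, hr⟩ * kPsi R r -
            kPsi R ⟨r.1 + 1, hr⟩ * kPsi R r * kPsi R ⟨r.1 + 1, hr⟩) * kE R i)
        (kE R i)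
  | braidNone (r : Fin (n - 1)) (hr : r.1 + 1 < n - 1) (i : Fin n → ZMod e)
      (h : ¬(i (pM r hr) = i (pL r) ∧
        (i (pR r) = i (pL r) + 1 ∨ i (pL r) = i (pR r) + 1))) :
      DefKLRRel R t n e ℓ κ
        ((kPsi R r * kPsi R ⟨r.1 + 1, hr⟩ * kPsi R r -
            kPsi R ⟨r.1 + 1, hr⟩ * kPsi R r * kPsi R ⟨r.1 + 1, hr⟩) * kE R i) 0

/-- The deformed cyclotomic quiver Hecke algebra `R_n(R)`. -/
noncomputable abbrev DefKLR (R : Type*) [CommRing R] (t : Rˣ) (n e ℓ : ℕ) [NeZero e]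
    (κ : ℕ → ℤ) : Type _ :=
  RingQuot (DefKLRRel R t n e ℓ κ)

/-- The generator `f_i` of the deformed cyclotomic quiver Hecke algebra. -/
noncomputable def DfGen (R : Type*) [CommRing R] (t : Rˣ) (n e ℓ : ℕ) [NeZero e]
    (κ : ℕ → ℤ) (i : Fin n → ZMod e) : DefKLR R t n e ℓ κ :=
  RingQuot.mkAlgHom R (DefKLRRel R t n e ℓ κ) (kE R i)

/-- The generator `ψ_r` of the deformed cyclotomic quiver Hecke algebra. -/
noncomputable def DpsiGen (R : Type*) [CommRing R] (t : Rˣ) (n e ℓ : ℕ) [NeZero e]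
    (κ : ℕ → ℤ) (r : Fin (n - 1)) : DefKLR R t n e ℓ κ :=
  RingQuot.mkAlgHom R (DefKLRRel R t n e ℓ κ) (kPsi R r)

/-- The generator `y_k` of the deformed cyclotomic quiver Hecke algebra. -/
noncomputable def DyGen (R : Type*) [CommRing R] (t : Rˣ) (n e ℓ : ℕ) [NeZero e]
    (κ : ℕ → ℤ) (k : Fin n) : DefKLR R t n e ℓ κ :=
  RingQuot.mkAlgHom R (DefKLRRel R t n e ℓ κ) (kY R k)

/-! ## Seminormal idempotents -/

/-- The seminormal idempotent `F_T` of the semisimple cyclotomic Hecke algebra: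
`F_T = ∏_{k=1}^n ∏_{c ∈ Cont(n), [c_k(T)] ≠ [c]} (L_k - [c]) / ([c_k(T)] - [c])`. -/
noncomputable def Fidem (K : Type*) [Field K] (tK : Kˣ) (n ℓ : ℕ) (κ : ℕ → ℤ)
    (T : StdTableau ℓ n) : CycHecke K tK n ℓ κ :=
  ((List.finRange n).map (fun k =>
    (((contFinset ℓ n κ).sort (· ≤ ·)).map (fun c =>
      if qint (tK : K) (content κ T (k.1 + 1)) ≠ qint (tK : K) c then
        (Lgen K tK n ℓ κ k - algebraMap K _ (qint (tK : K) c)) *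
          algebraMap K _ ((qint (tK : K) (content κ T (k.1 + 1)) - qint (tK : K) c)⁻¹)
      else 1)).prod)).prod

/-- The residue idempotent `f_i = Σ_{T ∈ Std(i)} F_T`. -/
noncomputable def fres (K : Type*) [Field K] (tK : Kˣ) (n ℓ e : ℕ) (κ : ℕ → ℤ)
    (i : Fin n → ZMod e) : CycHecke K tK n ℓ κ :=
  ∑ᶠ T : {T : StdTableau ℓ n // resSeq e κ T = i}, Fidem K tK n ℓ κ T.1

/-- The simultaneous two-sided eigenspace `H_{S,T}` of the Jucys–Murphy elements. -/
noncomputable def eigSub (K : Type*) [Field K] (tK : Kˣ) (n ℓ : ℕ) (κ : ℕ → ℤ)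
    (S T : StdTableau ℓ n) : Submodule K (CycHecke K tK n ℓ κ) where
  carrier := {h | ∀ k : Fin n,
      Lgen K tK n ℓ κ k * h = qint (tK : K) (content κ S (k.1 + 1)) • h ∧
      h * Lgen K tK n ℓ κ k = qint (tK : K) (content κ T (k.1 + 1)) • h}
  add_mem' := by
    intro a b ha hb
    intro k
    obtain ⟨h1, h2⟩ := ha k
    obtain ⟨h3, h4⟩ := hb k
    exact ⟨by rw [mul_add, h1, h3, smul_add], by rw [add_mul, h2, h4, smul_add]⟩
  zero_mem' := by intro k; simp
  smul_mem' := by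
    intro c a ha
    intro k
    obtain ⟨h1, h2⟩ := ha k
    constructor
    · rw [mul_smul_comm, h1, smul_comm]
    · rw [smul_mul_assoc, h2, smul_comm]

end Paper

namespace Paper

/-- The fraction field `ℚ(t)` of `ℚ[t]`. -/
noncomputable abbrev FFQ : Type := FractionRing (Polynomial ℚ)

/-- The image of the indeterminate `t` in `ℚ(t)`. -/
noncomputable def xQ : FFQ := algebraMap (Polynomial ℚ) FFQ Polynomial.X

/-- The exponent `d_e` determined by the residues mod `e` of the contents `ci`, `cj`. -/
noncomputable def dExp (e : ℕ) (ci cj : ℤ) : ℤ :=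
  if ((ci : ZMod e) = (cj : ZMod e)) then -2
  else if e = 2 ∧ ((cj : ZMod e) = (ci : ZMod e) + 1) then 2
  else if 2 < e ∧ (((cj : ZMod e) = (ci : ZMod e) + 1) ∨ ((ci : ZMod e) = (cj : ZMod e) + 1))
    then 1
  else 0

end Paper

namespace Paper

lemma qint_neg (m : ℕ) (hm : 0 < m) : qint xQ (-(m:ℤ)) = - (xQ ^ (-(m:ℤ)) * qint xQ (m:ℤ)) := by
  have hx : xQ ≠ 0 := by
    unfold xQ
    simp
  unfold qint
  rw [if_neg (by omega), if_pos (by omega)]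
  simp only [neg_neg, Int.toNat_natCast]
  congr 1
  rw [← Finset.sum_range_reflect, Finset.mul_sum]
  refine Finset.sum_congr rfl fun k hk => ?_
  rw [Finset.mem_range] at hk
  rw [← zpow_natCast, ← zpow_add₀ hx]
  congr 1
  omega

lemma qint_pos (m N : ℕ) (hm : 0 < m) (hN : m ≤ N) : qint xQ (m:ℤ) =
    ∏ e ∈ Finset.Icc 2 N, (algebraMap (Polynomial ℚ) FFQ (Polynomial.cyclotomic e ℚ)) ^
      (if (e:ℤ) ∣ m then (1:ℤ) else 0) := by
  have h1 : qint xQ (m:ℤ) = algebraMap (Polynomial ℚ) FFQ (∑ i ∈ Finset.range m, Polynomial.X ^ i) := by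
    unfold qint
    rw [if_pos (by omega)]
    simp [xQ]
  rw [h1, ← Polynomial.prod_cyclotomic_eq_geom_sum hm, map_prod]
  have h2 : m.divisors.erase 1 = (Finset.Icc 2 N).filter (fun e : ℕ => (e:ℤ) ∣ (m:ℤ)) := by
    ext e
    simp only [Finset.mem_erase, Nat.mem_divisors, Finset.mem_filter, Finset.mem_Icc, Int.natCast_dvd_natCast]
    constructor
    · rintro ⟨h, hd, h0⟩
      have := Nat.le_of_dvd hm hd
      have := Nat.pos_of_dvd_of_pos hd hm
      exact ⟨⟨by omega, by omega⟩, hd⟩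
    · rintro ⟨⟨h, h'⟩, hd⟩
      exact ⟨by omega, hd, by omega⟩
  rw [h2, Finset.prod_filter]
  refine Finset.prod_congr rfl fun e _ => ?_
  split_ifs <;> simp

lemma dExp_eq (e : ℕ) (he : 2 ≤ e) (ci cj : ℤ) :
    dExp e ci cj = (if (e:ℤ) ∣ (ci - cj) + 1 then 1 else 0) + (if (e:ℤ) ∣ (ci - cj) - 1 then 1 else 0)
      - 2 * (if (e:ℤ) ∣ (ci - cj) then 1 else 0) := by
  have h1 : ((ci : ZMod e) = (cj : ZMod e)) ↔ (e:ℤ) ∣ ci - cj := by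
    rw [← ZMod.intCast_zmod_eq_zero_iff_dvd]
    push_cast
    exact sub_eq_zero.symm
  have h2 : ((cj : ZMod e) = (ci : ZMod e) + 1) ↔ (e:ℤ) ∣ ci - cj + 1 := by
    rw [← (ZMod.intCast_zmod_eq_zero_iff_dvd (ci - cj + 1) e)]
    push_cast
    constructor
    · intro h; rw [h]; ring
    · intro h; linear_combination -h
  have h3 : ((ci : ZMod e) = (cj : ZMod e) + 1) ↔ (e:ℤ) ∣ ci - cj - 1 := by
    rw [← (ZMod.intCast_zmod_eq_zero_iff_dvd (ci - cj - 1) e)]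
    push_cast
    constructor
    · intro h; rw [h]; ring
    · intro h; linear_combination h
  unfold dExp
  simp only [h1, h2, h3]
  generalize ci - cj = ρ
  have small : ∀ x : ℤ, (e:ℤ) ∣ x → 0 < x → (e:ℤ) ≤ x := fun x hx h0 => Int.le_of_dvd h0 hx
  have k1 : (e:ℤ) ∣ ρ → ¬ (e:ℤ) ∣ ρ + 1 := fun a b => by
    have := small _ (by simpa using dvd_sub b a) (by omega); omega
  have k2 : (e:ℤ) ∣ ρ → ¬ (e:ℤ) ∣ ρ - 1 := fun a b => by
    have := small 1 (by simpa using dvd_sub a b) (by omega); omega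
  have k3 : 2 < e → (e:ℤ) ∣ ρ + 1 → ¬ (e:ℤ) ∣ ρ - 1 := fun h a b => by
    have := small 2 (by have := dvd_sub a b; ring_nf at this; exact this) (by omega); omega
  have k4 : e = 2 → ((e:ℤ) ∣ ρ + 1 ↔ (e:ℤ) ∣ ρ - 1) := by
    rintro rfl; constructor <;> intro h <;> omega
  have k5 : e = 2 ∨ 2 < e := by omega
  split_ifs <;> grind

lemma part1 (ci cj : ℤ) (h : 2 ≤ ci - cj) :
    ((qint xQ (1 + (ci - cj)) * qint xQ (1 + (cj - ci))) /
        (qint xQ (ci - cj) * qint xQ (cj - ci)) =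
      xQ * ∏ᶠ (e : ℕ) (_ : 2 ≤ e),
        (algebraMap (Polynomial ℚ) FFQ (Polynomial.cyclotomic e ℚ)) ^
          (dExp e ci cj)) := by
  have hx : xQ ≠ 0 := by
    unfold xQ
    simp
  have hc : ∀ e, algebraMap (Polynomial ℚ) FFQ (Polynomial.cyclotomic e ℚ) ≠ 0 := by
    intro e
    simp [Polynomial.cyclotomic_ne_zero]
  obtain ⟨m, hm⟩ : ∃ m : ℕ, ci - cj = m := ⟨(ci - cj).toNat, by omega⟩
  have hm2 : 2 ≤ m := by omega
  have hfp : (∏ᶠ (e : ℕ) (_ : 2 ≤ e),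
        (algebraMap (Polynomial ℚ) FFQ (Polynomial.cyclotomic e ℚ)) ^ (dExp e ci cj)) =
      ∏ e ∈ Finset.Icc 2 (m+1), (algebraMap (Polynomial ℚ) FFQ (Polynomial.cyclotomic e ℚ)) ^ (dExp e ci cj) := by
    apply finprod_cond_eq_prod_of_cond_iff
    intro e hne
    rw [Finset.mem_Icc]
    refine ⟨fun h2 => ⟨h2, ?_⟩, fun h => h.1⟩
    by_contra hlt
    apply hne
    have big : ∀ x : ℤ, 0 < x → x < e → ¬ (e:ℤ) ∣ x := fun x h0 hx hd => by
      have := Int.le_of_dvd h0 hd; omega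
    rw [dExp_eq e h2, if_neg (big _ (by omega) (by omega)), if_neg (big _ (by omega) (by omega)),
      if_neg (big _ (by omega) (by omega))]
    simp
  have e1 : (1 + (ci - cj)) = ((m+1 : ℕ):ℤ) := by push_cast; omega
  have e2 : (1 + (cj - ci)) = -((m-1 : ℕ):ℤ) := by omega
  have e3 : (cj - ci) = -(m:ℤ) := by omega
  rw [hfp, e1, e2, e3, hm, qint_neg _ (by omega), qint_neg _ (by omega)]
  have hq : ∀ k : ℕ, 0 < k → k ≤ m+1 → qint xQ (k:ℤ) ≠ 0 := by
    intro k h1 h2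
    rw [qint_pos k (m+1) h1 h2]
    exact Finset.prod_ne_zero_iff.2 fun e _ => zpow_ne_zero _ (hc e)
  have key : qint xQ ((m+1:ℕ):ℤ) * qint xQ ((m-1:ℕ):ℤ) = 
     (∏ e ∈ Finset.Icc 2 (m+1), (algebraMap (Polynomial ℚ) FFQ (Polynomial.cyclotomic e ℚ)) ^ (dExp e ci cj))
      * (qint xQ (m:ℤ) * qint xQ (m:ℤ)) := by
    rw [qint_pos (m+1) (m+1) (by omega) le_rfl, qint_pos (m-1) (m+1) (by omega) (by omega),
      qint_pos m (m+1) (by omega) (by omega), ← Finset.prod_mul_distrib, ← Finset.prod_mul_distrib,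
      ← Finset.prod_mul_distrib]
    refine Finset.prod_congr rfl fun e he => ?_
    rw [← zpow_add₀ (hc e), ← zpow_add₀ (hc e), ← zpow_add₀ (hc e), dExp_eq e (Finset.mem_Icc.1 he).1, hm]
    congr 1
    have : ((m-1:ℕ):ℤ) = m - 1 := by omega
    rw [this]
    push_cast
    ring
  have hqm := hq m (by omega) (by omega)
  have hpw : xQ ^ (-((m-1:ℕ):ℤ)) = xQ * xQ ^ (-(m:ℤ)) := by
    rw [← zpow_one_add₀ hx]; congr 1; omega
  have hz := zpow_ne_zero (-(m:ℤ)) hx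
  rw [hpw, div_eq_iff (mul_ne_zero hqm (neg_ne_zero.2 (mul_ne_zero hz hqm)))]
  linear_combination (- xQ * xQ ^ (-(m:ℤ))) * key

end Paper

namespace Paper

lemma diag_mono {ℓ : ℕ} {S : Set Node} (h : IsDiagramSet ℓ S) {l p q p' q' : ℕ}
    (hm : (l, p, q) ∈ S) (hp : p' ≤ p) (hq : q' ≤ q) : (l, p', q') ∈ S := by
  obtain ⟨_, _, h1, h2⟩ := h
  have h3 : (l, p', q) ∈ S := by
    induction p, hp using Nat.le_induction with
    | base => exact hm
    | succ k _ ih => exact ih (h2 _ _ _ hm)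
  induction q, hq using Nat.le_induction with
  | base => exact h3
  | succ k _ ih => exact ih (h1 _ _ _ hm) (h1 _ _ _ h3)

lemma addable_iff {ℓ : ℕ} {S : Set Node} (h : IsDiagramSet ℓ S) (l p q : ℕ) :
    Addable ℓ S (l, p, q) ↔ (l, p, q) ∉ S ∧ l < ℓ ∧ (q = 0 ∨ (l, p, q - 1) ∈ S) ∧
      (p = 0 ∨ (l, p - 1, q) ∈ S) := by
  obtain ⟨h0, h1, h2, h3⟩ := h
  constructor
  · rintro ⟨hn, k0, k1, k2, k3⟩
    refine ⟨hn, k1 _ (Or.inr rfl), ?_, ?_⟩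
    · rcases q with _ | q
      · simp
      · right
        have := k2 l p q (Or.inr rfl)
        simpa using this
    · rcases p with _ | p
      · simp
      · right
        have := k3 l p q (Or.inr rfl)
        simpa using this
  · rintro ⟨hn, hl, hq, hp⟩
    refine ⟨hn, h0.union (Set.finite_singleton _), ?_, ?_, ?_⟩
    · rintro A (hA | hA)
      · exact h1 A hA
      · rw [Set.mem_singleton_iff.1 hA]; exact hl
    · rintro l' p' q' (hA | hA)
      · exact Or.inl (h2 _ _ _ hA)
      · simp only [Set.mem_singleton_iff, Prod.mk.injEq] at hA
        obtain ⟨rfl, rfl, rfl⟩ := hA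
        left; simpa using hq
    · rintro l' p' q' (hA | hA)
      · exact Or.inl (h3 _ _ _ hA)
      · simp only [Set.mem_singleton_iff, Prod.mk.injEq] at hA
        obtain ⟨rfl, rfl, rfl⟩ := hA
        left; simpa using hp

lemma removable_iff {ℓ : ℕ} {S : Set Node} (h : IsDiagramSet ℓ S) (l p q : ℕ) :
    Removable ℓ S (l, p, q) ↔ (l, p, q) ∈ S ∧ (l, p, q + 1) ∉ S ∧ (l, p + 1, q) ∉ S := by
  obtain ⟨h0, h1, h2, h3⟩ := h
  constructor
  · rintro ⟨hn, k0, k1, k2, k3⟩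
    refine ⟨hn, fun hc => ?_, fun hc => ?_⟩
    · exact (k2 l p q ⟨hc, by simp⟩).2 rfl
    · exact (k3 l p q ⟨hc, by simp⟩).2 rfl
  · rintro ⟨hn, hq, hp⟩
    refine ⟨hn, h0.sdiff, fun A hA => h1 A hA.1, ?_, ?_⟩
    · rintro l' p' q' ⟨hA, hA'⟩
      refine ⟨h2 _ _ _ hA, fun hc => ?_⟩
      simp only [Set.mem_singleton_iff, Prod.mk.injEq] at hc
      obtain ⟨rfl, rfl, rfl⟩ := hc
      exact hq hA
    · rintro l' p' q' ⟨hA, hA'⟩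
      refine ⟨h3 _ _ _ hA, fun hc => ?_⟩
      simp only [Set.mem_singleton_iff, Prod.mk.injEq] at hc
      obtain ⟨rfl, rfl, rfl⟩ := hc
      exact hp hA

lemma addable_union {ℓ : ℕ} {P : Set Node} (h : IsDiagramSet ℓ P) {l p q : ℕ}
    (hB : Addable ℓ P (l, p, q)) (x y z : ℕ) :
    Addable ℓ (P ∪ {(l, p, q)}) (x, y, z) ↔
      (Addable ℓ P (x, y, z) ∧ (x, y, z) ≠ (l, p, q)) ∨
      ((x, y, z) = (l, p, q + 1) ∧ (p = 0 ∨ (l, p - 1, q + 1) ∈ P)) ∨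
      ((x, y, z) = (l, p + 1, q) ∧ (q = 0 ∨ (l, p + 1, q - 1) ∈ P)) := by
  have hn1 : (l, p, q + 1) ∉ P := fun hc => hB.1 (h.2.2.1 _ _ _ hc)
  have hn2 : (l, p + 1, q) ∉ P := fun hc => hB.1 (h.2.2.2 _ _ _ hc)
  rw [addable_iff hB.2, addable_iff h]
  rw [addable_iff h] at hB
  obtain ⟨b1, b2, b3, b4⟩ := hB
  simp only [Set.mem_union, Set.mem_singleton_iff, Prod.mk.injEq, ne_eq]
  constructor
  · rintro ⟨hn, hl, hz, hy⟩
    by_cases hR : x = l ∧ y = p ∧ z = q + 1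
    · obtain ⟨rfl, rfl, rfl⟩ := hR
      grind
    by_cases hD : x = l ∧ y = p + 1 ∧ z = q
    · obtain ⟨rfl, rfl, rfl⟩ := hD
      grind
    left
    grind
  · rintro (⟨⟨h1, h2, h3, h4⟩, h5⟩ | ⟨⟨rfl, rfl, rfl⟩, h⟩ | ⟨⟨rfl, rfl, rfl⟩, h⟩)
    · grind
    · grind
    · grind

lemma removable_union {ℓ : ℕ} {P : Set Node} (h : IsDiagramSet ℓ P) {l p q : ℕ}
    (hB : Addable ℓ P (l, p, q)) (x y z : ℕ) :
    Removable ℓ P (x, y, z) ↔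
      (Removable ℓ (P ∪ {(l, p, q)}) (x, y, z) ∧ (x, y, z) ≠ (l, p, q)) ∨
      ((x, y, z) = (l, p - 1, q) ∧ p ≠ 0 ∧ (l, p - 1, q + 1) ∉ P) ∨
      ((x, y, z) = (l, p, q - 1) ∧ q ≠ 0 ∧ (l, p + 1, q - 1) ∉ P) := by
  rw [removable_iff hB.2, removable_iff h]
  rw [addable_iff h] at hB
  obtain ⟨b1, b2, b3, b4⟩ := hB
  simp only [Set.mem_union, Set.mem_singleton_iff, Prod.mk.injEq, ne_eq]
  constructor
  · rintro ⟨hn, hl, hz⟩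
    by_cases hR : x = l ∧ y + 1 = p ∧ z = q
    · obtain ⟨rfl, rfl, rfl⟩ := hR
      grind
    by_cases hD : x = l ∧ y = p ∧ z + 1 = q
    · obtain ⟨rfl, rfl, rfl⟩ := hD
      grind
    left
    grind
  · rintro (⟨⟨h1, h2, h3⟩, h4⟩ | ⟨⟨rfl, rfl, rfl⟩, h⟩ | ⟨⟨rfl, rfl, rfl⟩, h⟩)
    · grind
    · grind
    · grind

lemma resNode_eq (e : ℕ) (κ : ℕ → ℤ) (X A : Node) : resNode e κ X = resNode e κ A ↔
    (e:ℤ) ∣ (κ A.1 + A.2.2 - A.2.1) - (κ X.1 + X.2.2 - X.2.1) := by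
  rw [← (ZMod.intCast_zmod_eq_zero_iff_dvd _ e)]
  unfold resNode
  rw [Int.cast_sub _ (κ X.1 + X.2.2 - X.2.1), sub_eq_zero]
  exact eq_comm

lemma exists_box {ℓ : ℕ} {S : Set Node} (h : IsDiagramSet ℓ S) : ∃ N : ℕ, ∀ M ≥ N,
    (∀ X, Addable ℓ S X → X ∈ Finset.range (ℓ+1) ×ˢ Finset.range (M+1) ×ˢ Finset.range (M+1)) ∧
    (∀ X, Removable ℓ S X → X ∈ Finset.range (ℓ+1) ×ˢ Finset.range (M+1) ×ˢ Finset.range (M+1)) := by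
  obtain ⟨N, hN⟩ := (h.1.image (fun X : Node => X.2.1 + X.2.2)).bddAbove
  have hN' : ∀ l p q, (l, p, q) ∈ S → l < ℓ ∧ p + q ≤ N := fun l p q hm =>
    ⟨h.2.1 _ hm, hN (Set.mem_image_of_mem (fun X : Node => X.2.1 + X.2.2) hm)⟩
  refine ⟨N + 1, fun M hM => ⟨?_, ?_⟩⟩
  · rintro ⟨l, p, q⟩ hX
    rw [addable_iff h] at hX
    obtain ⟨_, h1, h2, h3⟩ := hX
    simp only [Finset.mem_product, Finset.mem_range]
    refine ⟨by omega, ?_, ?_⟩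
    · rcases h3 with h3 | h3
      · omega
      · have := hN' _ _ _ h3; omega
    · rcases h2 with h3 | h3
      · omega
      · have := hN' _ _ _ h3; omega
  · rintro ⟨l, p, q⟩ hX
    have := hN' _ _ _ hX.1
    simp only [Finset.mem_product, Finset.mem_range]
    omega

/-- Integer indicator of a proposition. -/
noncomputable def ind (p : Prop) : ℤ := if p then 1 else 0

lemma ind_or {p q : Prop} (h : p → ¬ q) : ind (p ∨ q) = ind p + ind q := by
  unfold ind
  by_cases hp : p
  · have := h hp
    simp [hp, this]
  · simp [hp]

lemma ind_true {p : Prop} (h : p) : ind p = 1 := if_pos h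

lemma ind_false {p : Prop} (h : ¬ p) : ind p = 0 := if_neg h

lemma ncard_eq_sum (W : Finset Node) (p C : Node → Prop) (h : ∀ X, p X → X ∈ W) :
    (Set.ncard {X | p X ∧ C X} : ℤ) = ∑ X ∈ W.filter C, ind (p X) := by
  have : {X | p X ∧ C X} = (((W.filter C).filter p : Finset Node) : Set Node) := by
    ext X
    simp only [Set.mem_ofPred_eq, Finset.coe_filter, Finset.mem_filter]
    exact ⟨fun hp => ⟨⟨h X hp.1, hp.2⟩, hp.1⟩, fun hp => ⟨hp.2, hp.1.2⟩⟩
  rw [this, Set.ncard_coe_finset, Finset.card_filter]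
  push_cast
  rfl

lemma sum_ind (W : Finset Node) (C : Node → Prop) (Y : Node) (hY : Y ∈ W) (q : Prop) :
    ∑ X ∈ W.filter C, ind (X = Y ∧ q) = ind (q ∧ C Y) := by
  have : ∀ X, ind (X = Y ∧ q) = if X = Y then ind q else 0 := by
    intro X
    unfold ind
    by_cases h : X = Y <;> simp [h]
  simp only [this]
  rw [Finset.sum_ite_eq']
  unfold ind
  by_cases hC : C Y <;> simp [hY, hC]

lemma point {ℓ : ℕ} {P : Set Node} (h : IsDiagramSet ℓ P)
    {l p q : ℕ} (hB : Addable ℓ P (l, p, q)) (X : Node) :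
    (ind (Addable ℓ (P ∪ {(l, p, q)}) X) - ind (Removable ℓ (P ∪ {(l, p, q)}) X))
      - (ind (Addable ℓ P X) - ind (Removable ℓ P X)) =
      -2 * ind (X = (l, p, q) ∧ True) +
      (ind (X = (l, p, q+1) ∧ (p = 0 ∨ (l, p - 1, q + 1) ∈ P)) +
      ind (X = (l, p+1, q) ∧ (q = 0 ∨ (l, p + 1, q - 1) ∈ P))) +
      (ind (X = (l, p-1, q) ∧ p ≠ 0 ∧ (l, p - 1, q + 1) ∉ P) +
      ind (X = (l, p, q-1) ∧ q ≠ 0 ∧ (l, p + 1, q - 1) ∉ P)) := by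
  obtain ⟨x, y, z⟩ := X
  have ca := addable_union h hB x y z
  have cr := removable_union h hB x y z
  have hn1 : (l, p, q + 1) ∉ P := fun hc => hB.1 (h.2.2.1 _ _ _ hc)
  have hn2 : (l, p + 1, q) ∉ P := fun hc => hB.1 (h.2.2.2 _ _ _ hc)
  by_cases e0 : (x, y, z) = (l, p, q)
  · rw [e0]
    have hAddB : ¬ Addable ℓ (P ∪ {(l, p, q)}) (l, p, q) := fun hc => hc.1 (Or.inr rfl)
    have hRemB : Removable ℓ (P ∪ {(l, p, q)}) (l, p, q) := by
      rw [removable_iff hB.2]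
      refine ⟨Or.inr rfl, ?_, ?_⟩ <;> simp [hn1, hn2]
    have hRemB' : ¬ Removable ℓ P (l, p, q) := fun hc => hB.1 hc.1
    rw [ind_false hAddB, ind_true hRemB, ind_true hB, ind_false hRemB', ind_true ⟨rfl, trivial⟩,
      ind_false, ind_false, ind_false, ind_false]
    · norm_num
    all_goals simp only [Prod.mk.injEq]; omega
  · simp only [ne_eq, e0, not_false_eq_true, and_true] at ca cr
    rw [ind_false (p := (x, y, z) = (l, p, q) ∧ True) (by tauto), ca, cr, ind_or, ind_or, ind_or, ind_or]
    · simp only [ne_eq]; ring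
    · simp only [Prod.mk.injEq]; omega
    · intro h1
      rw [removable_iff hB.2] at h1
      obtain ⟨_, h1, h2⟩ := h1
      simp only [Set.mem_union, Set.mem_singleton_iff, Prod.mk.injEq] at h1 h2 ⊢
      omega
    · simp only [Prod.mk.injEq]; omega
    · intro h1
      have hh := hB.1
      rw [addable_iff h] at h1
      obtain ⟨_, _, h1, h2⟩ := h1
      rintro (h3 | h3)
      · have h4 := h3.1
        simp only [Prod.mk.injEq] at h4
        obtain ⟨rfl, rfl, rfl⟩ := h4
        simp [hh] at h1
      · have h4 := h3.1
        simp only [Prod.mk.injEq] at h4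
        obtain ⟨rfl, rfl, rfl⟩ := h4
        simp [hh] at h2

lemma dNode_add_below {ℓ e : ℕ} (he : 2 ≤ e) (κ : ℕ → ℤ) {P : Set Node} (h : IsDiagramSet ℓ P)
    {a b c l p q : ℕ} (hA : (a, b, c) ∈ P)
    (hB : Addable ℓ P (l, p, q)) (hAB : a < l ∨ (a = l ∧ b < p ∧ q < c)) :
    dNode ℓ e κ (P ∪ {(l, p, q)}) (a, b, c) - dNode ℓ e κ P (a, b, c) =
      dExp e (κ a + c - b) (κ l + q - p) := by
  obtain ⟨N1, hN1⟩ := exists_box h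
  obtain ⟨N2, hN2⟩ := exists_box hB.2
  obtain ⟨M, hM⟩ : ∃ M, M = N1 + N2 + p + q + 1 := ⟨_, rfl⟩
  obtain ⟨k1, k2⟩ := hN1 M (by omega)
  obtain ⟨k3, k4⟩ := hN2 M (by omega)
  have hl : l < ℓ := hB.2.2.1 _ (Or.inr rfl)
  generalize hW : Finset.range (ℓ+1) ×ˢ Finset.range (M+1) ×ˢ Finset.range (M+1) = W at *
  have mB : (l, p, q) ∈ W := by
    simp only [← hW, Finset.mem_product, Finset.mem_range]; omega
  have mR : (l, p, q + 1) ∈ W := by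
    simp only [← hW, Finset.mem_product, Finset.mem_range]; omega
  have mD : (l, p + 1, q) ∈ W := by
    simp only [← hW, Finset.mem_product, Finset.mem_range]; omega
  have mU : (l, p - 1, q) ∈ W := by
    simp only [← hW, Finset.mem_product, Finset.mem_range]; omega
  have mL : (l, p, q - 1) ∈ W := by
    simp only [← hW, Finset.mem_product, Finset.mem_range]; omega
  unfold dNode
  obtain ⟨C, hC⟩ : ∃ C : Node → Prop, C = fun X => resNode e κ X = resNode e κ (a, b, c) ∧ nodeBelow (a, b, c) X := ⟨_, rfl⟩
  have hC' : ∀ X, (resNode e κ X = resNode e κ (a, b, c) ∧ nodeBelow (a, b, c) X) ↔ C X := by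
    intro X; rw [hC]
  simp only [hC']
  rw [ncard_eq_sum W _ C k1, ncard_eq_sum W _ C k2, ncard_eq_sum W _ C k3, ncard_eq_sum W _ C k4]
  rw [← Finset.sum_sub_distrib, ← Finset.sum_sub_distrib, ← Finset.sum_sub_distrib,
    Finset.sum_congr rfl (fun X _ => point h hB X)]
  obtain ⟨hR, hhR⟩ : ∃ hR : Prop, hR = (p = 0 ∨ (l, p - 1, q + 1) ∈ P) := ⟨_, rfl⟩
  obtain ⟨hD, hhD⟩ : ∃ hD : Prop, hD = (q = 0 ∨ (l, p + 1, q - 1) ∈ P) := ⟨_, rfl⟩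
  have hU : (p ≠ 0 ∧ (l, p - 1, q + 1) ∉ P) ↔ ¬ hR := by rw [hhR]; tauto
  have hL : (q ≠ 0 ∧ (l, p + 1, q - 1) ∉ P) ↔ ¬ hD := by rw [hhD]; tauto
  simp only [Finset.sum_add_distrib, ← Finset.mul_sum]
  rw [sum_ind _ _ _ mB, sum_ind _ _ _ mR, sum_ind _ _ _ mD, sum_ind _ _ _ mU, sum_ind _ _ _ mL,
    hU, hL, ← hhR, ← hhD]
  have nB : nodeBelow (a, b, c) (l, p, q) := by unfold nodeBelow; simp; omega
  have nR : nodeBelow (a, b, c) (l, p, q+1) := by unfold nodeBelow; simp; omega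
  have nD : nodeBelow (a, b, c) (l, p+1, q) := by unfold nodeBelow; simp; omega
  have nL : nodeBelow (a, b, c) (l, p, q-1) := by unfold nodeBelow; simp; omega
  have nU : ¬ hR → nodeBelow (a, b, c) (l, p-1, q) := by
    intro h0
    rw [← hU] at h0
    unfold nodeBelow
    simp only
    by_contra hcon
    have : a = l ∧ b = p - 1 ∧ q + 1 ≤ c := by omega
    obtain ⟨rfl, rfl, h3⟩ := this
    exact h0.2 (diag_mono h hA le_rfl h3)
  have cB : C (l, p, q) ↔ (e:ℤ) ∣ (κ a + c - b) - (κ l + q - p) := by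
    rw [← hC', resNode_eq]; simp only [nB, and_true]
  have cR : C (l, p, q+1) ↔ (e:ℤ) ∣ (κ a + c - b) - (κ l + q - p) - 1 := by
    rw [← hC', resNode_eq]; simp only [nR, and_true]; push_cast; ring_nf
  have cD : C (l, p+1, q) ↔ (e:ℤ) ∣ (κ a + c - b) - (κ l + q - p) + 1 := by
    rw [← hC', resNode_eq]; simp only [nD, and_true]; push_cast; ring_nf
  have cU : ¬ hR → (C (l, p-1, q) ↔ (e:ℤ) ∣ (κ a + c - b) - (κ l + q - p) - 1) := by
    intro h0
    have := nU h0
    rw [← hU] at h0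
    rw [← hC', resNode_eq]; simp only [this, and_true]; rw [Nat.cast_pred (by omega)]; ring_nf
  have cL : ¬ hD → (C (l, p, q-1) ↔ (e:ℤ) ∣ (κ a + c - b) - (κ l + q - p) + 1) := by
    intro h0
    rw [← hL] at h0
    rw [← hC', resNode_eq]; simp only [nL, and_true]; rw [Nat.cast_pred (by omega)]; ring_nf
  rw [dExp_eq e he]
  have i1 : ind (hR ∧ C (l, p, q+1)) + ind (¬ hR ∧ C (l, p-1, q)) =
      ind ((e:ℤ) ∣ (κ a + c - b) - (κ l + q - p) - 1) := by
    by_cases g : hR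
    · simp only [g, true_and, not_true_eq_false, false_and, cR]; simp [ind]
    · have := cU g
      simp only [g, true_and, not_false_eq_true, false_and, this]; simp [ind]
  have i2 : ind (hD ∧ C (l, p+1, q)) + ind (¬ hD ∧ C (l, p, q-1)) =
      ind ((e:ℤ) ∣ (κ a + c - b) - (κ l + q - p) + 1) := by
    by_cases g : hD
    · simp only [g, true_and, not_true_eq_false, false_and, cD]; simp [ind]
    · have := cL g
      simp only [g, true_and, not_false_eq_true, false_and, this]; simp [ind]
  rw [true_and, cB]
  have i3 : ∀ z : ℤ, (if (e:ℤ) ∣ z then (1:ℤ) else 0) = ind ((e:ℤ) ∣ z) := by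
    intro z; unfold ind; congr
  simp only [i3]
  linarith

lemma dNode_add_above {ℓ e : ℕ} (he : 2 ≤ e) (κ : ℕ → ℤ) {P P' : Set Node} (h : IsDiagramSet ℓ P)
    (h' : IsDiagramSet ℓ P')
    {a b c l p q : ℕ} (hsub : ∀ X ∈ P', X ≠ (l, p, q) → X ∈ P) (hB : (l, p, q) ∉ P)
    (hA : Addable ℓ P' (a, b, c)) (hAB : a < l ∨ (a = l ∧ b < p ∧ q < c)) :
    dNode ℓ e κ (P' ∪ {(a, b, c)}) (l, p, q) = dNode ℓ e κ P' (l, p, q) := by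
  unfold dNode
  congr 3
  · ext ⟨x, y, z⟩
    simp only [Set.mem_ofPred_eq]
    rw [addable_union h' hA]
    simp only [resNode_eq, nodeBelow, Prod.mk.injEq, ne_eq]
    constructor
    · rintro ⟨h1 | ⟨⟨rfl, rfl, rfl⟩, h1⟩ | ⟨⟨rfl, rfl, rfl⟩, h1⟩, h2, h3⟩
      · exact ⟨h1.1, h2, h3⟩
      · omega
      · exfalso
        have hh : x = l ∧ b + 1 = p ∧ q < z := by omega
        obtain ⟨rfl, rfl, h4⟩ := hh
        have h5 : (x, b + 1, z - 1) ∈ P' := h1.resolve_left (by omega)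
        by_cases h6 : z - 1 = q
        · obtain rfl : z = q + 1 := by omega
          push_cast at h2
          have : (e:ℤ) ∣ 1 := by
            have := (dvd_neg.2 h2)
            ring_nf at this
            exact this
          have := Int.le_of_dvd (by omega) this
          omega
        · have := hsub _ h5 (by simpa using h6)
          exact hB (diag_mono h this le_rfl (by omega))
    · rintro ⟨h1, h2, h3⟩
      exact ⟨Or.inl ⟨h1, by omega⟩, h2, h3⟩
  · ext ⟨x, y, z⟩
    simp only [Set.mem_ofPred_eq]
    rw [removable_union h' hA]
    simp only [nodeBelow, Prod.mk.injEq, ne_eq]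
    constructor
    · rintro ⟨h1, h2, h3⟩
      exact ⟨Or.inl ⟨h1, by omega⟩, h2, h3⟩
    · rintro ⟨h1 | ⟨⟨rfl, rfl, rfl⟩, h1⟩ | ⟨⟨rfl, rfl, rfl⟩, h1⟩, h2, h3⟩
      · exact ⟨h1.1, h2, h3⟩
      · omega
      · omega

end Paper

namespace Paper

lemma node_mem {ℓ n : ℕ} (T : StdTableau ℓ n) {k : ℕ} (h1 : 1 ≤ k) (h2 : k ≤ n) :
    T.node k ∈ T.shape.diagram :=
  Function.invFunOn_mem (T.bijOn.surjOn ⟨h1, h2⟩)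

lemma node_entry {ℓ n : ℕ} (T : StdTableau ℓ n) {k : ℕ} (h1 : 1 ≤ k) (h2 : k ≤ n) :
    T.entry (T.node k) = k :=
  Function.invFunOn_eq (T.bijOn.surjOn ⟨h1, h2⟩)

lemma node_eq {ℓ n : ℕ} (T : StdTableau ℓ n) {X : Node} {k : ℕ} (hX : X ∈ T.shape.diagram)
    (hk : T.entry X = k) : T.node k = X := by
  have hk' := T.bijOn.mapsTo hX
  rw [hk] at hk'
  exact T.bijOn.injOn (node_mem T hk'.1 hk'.2) hX (by rw [node_entry T hk'.1 hk'.2, hk])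

lemma diagram_finite {ℓ n : ℕ} (T : StdTableau ℓ n) : T.shape.diagram.Finite :=
  T.bijOn.finite_iff_finite.2 (Set.finite_Icc 1 n)

lemma restDiag_isDiagram {ℓ n : ℕ} (T : StdTableau ℓ n) (m : ℕ) : IsDiagramSet ℓ (restDiag T m) := by
  refine ⟨(diagram_finite T).subset fun X hX => hX.1, ?_, ?_, ?_⟩
  · rintro ⟨l, p, q⟩ ⟨hX, _⟩
    by_contra hc
    simp only [not_lt] at hc
    have : q < T.shape.part l p := hX
    rw [T.shape.comp_bound l hc p] at this
    omega
  · rintro l p q ⟨hX, hm⟩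
    have h1 : q + 1 < T.shape.part l p := hX
    exact ⟨show q < T.shape.part l p by omega, le_of_lt (lt_of_lt_of_le (T.row_inc _ _ _ hX) hm)⟩
  · rintro l p q ⟨hX, hm⟩
    have h1 : q < T.shape.part l (p+1) := hX
    have h2 := T.shape.antitone l (Nat.le_succ p)
    exact ⟨show q < T.shape.part l p from lt_of_lt_of_le h1 h2,
      le_of_lt (lt_of_lt_of_le (T.col_inc _ _ _ hX) hm)⟩

lemma restDiag_succ {ℓ n : ℕ} (T : StdTableau ℓ n) {m : ℕ} (hm : m < n) :
    restDiag T (m+1) = restDiag T m ∪ {T.node (m+1)} := by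
  ext X
  simp only [restDiag, Set.mem_union, Set.mem_ofPred_eq, Set.mem_singleton_iff]
  constructor
  · rintro ⟨h1, h2⟩
    rcases Nat.lt_or_ge m (T.entry X) with h | h
    · right; exact (node_eq T h1 (by omega)).symm
    · left; exact ⟨h1, h⟩
  · rintro (⟨h1, h2⟩ | rfl)
    · exact ⟨h1, by omega⟩
    · exact ⟨node_mem T (by omega) (by omega), (node_entry T (by omega) (by omega)).le⟩

lemma node_notMem {ℓ n : ℕ} (T : StdTableau ℓ n) {m : ℕ} (hm : m < n) :
    T.node (m+1) ∉ restDiag T m := by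
  rintro ⟨_, h⟩
  rw [node_entry T (by omega) (by omega)] at h
  omega

lemma node_addable {ℓ n : ℕ} (T : StdTableau ℓ n) {m : ℕ} (hm : m < n) :
    Addable ℓ (restDiag T m) (T.node (m+1)) := by
  refine ⟨node_notMem T hm, ?_⟩
  rw [← restDiag_succ T hm]
  exact restDiag_isDiagram T _

lemma kappa_gap (n ℓ : ℕ) (κ : ℕ → ℤ) (hκ : ∀ l, l + 1 < ℓ → (n : ℤ) < κ l - κ (l + 1))
    (a l : ℕ) (hal : a < l) (hl : l < ℓ) : (n:ℤ) < κ a - κ l := by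
  induction l, hal using Nat.le_induction with
  | base => exact hκ a hl
  | succ k _ ih =>
    have h1 := ih (by omega)
    have h2 := hκ k hl
    omega

lemma hook_bound {ℓ n : ℕ} (T : StdTableau ℓ n) {a b c l p q : ℕ} (hal : a ≠ l)
    (hA : (a, b, c) ∈ T.shape.diagram) (hB : (l, p, q) ∈ T.shape.diagram) :
    (b + 1) + (q + 1) ≤ n := by
  have hD := restDiag_isDiagram T n
  have hAll : ∀ X ∈ T.shape.diagram, X ∈ restDiag T n := fun X hX => ⟨hX, (T.bijOn.mapsTo hX).2⟩
  have hinj : Set.InjOn T.entry ((((Finset.range (b+1)).image (fun i => ((a, i, c) : Node))) ∪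
      ((Finset.range (q+1)).image (fun j => ((l, p, j) : Node))) : Finset Node) : Set Node) := by
    apply T.bijOn.injOn.mono
    intro X hX
    simp only [Finset.coe_union, Finset.coe_image, Set.mem_union, Set.mem_image, Finset.mem_coe, Finset.mem_range] at hX
    rcases hX with ⟨i, hi, rfl⟩ | ⟨j, hj, rfl⟩
    · exact (diag_mono hD (hAll _ hA) (by omega) le_rfl).1
    · exact (diag_mono hD (hAll _ hB) le_rfl (by omega)).1
  have hle := Finset.card_le_card_of_injOn (t := Finset.Icc 1 n) T.entry ?_ hinj
  · rw [Finset.card_union_of_disjoint, Finset.card_image_of_injective, Finset.card_image_of_injective] at hle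
    · simpa using hle
    · intro i j h; simpa using h
    · intro i j h; simpa using h
    · rw [Finset.disjoint_left]
      intro X h1 h2
      simp only [Finset.mem_image] at h1 h2
      obtain ⟨i, _, rfl⟩ := h1
      obtain ⟨j, _, h⟩ := h2
      simp at h
      exact hal h.1.symm
  · intro X hX
    simp only [Finset.coe_union, Finset.coe_image, Set.mem_union, Set.mem_image, Finset.mem_coe, Finset.mem_range] at hX
    rw [Finset.coe_Icc]
    apply T.bijOn.mapsTo
    rcases hX with ⟨i, hi, rfl⟩ | ⟨j, hj, rfl⟩
    · exact (diag_mono hD (hAll _ hA) (by omega) le_rfl).1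
    · exact (diag_mono hD (hAll _ hB) le_rfl (by omega)).1

set_option maxHeartbeats 1000000 in
/-- for standard tableaux `s ⊳ t = s·(r, r+1)` of the same shape, with
`κ_l - κ_{l+1} > n`, in `ℚ(t)` one has
`([1+ρ_r(s)][1+ρ_r(t)])/([ρ_r(s)][ρ_r(t)]) = t ∏_{e ≥ 2} Φ_e(t)^{d_e}` where the
exponents `d_e` are given by the residue cases, and moreover
`d_e = deg_e(t) - deg_e(s)` for every `e ≥ 2`. -/
theorem gamma_recurrence_cyclotomic (n ℓ : ℕ) (hℓ : 1 ≤ ℓ) (κ : ℕ → ℤ)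
    (hκ : ∀ l, l + 1 < ℓ → (n : ℤ) < κ l - κ (l + 1))
    (S T : StdTableau ℓ n) (hshape : T.shape = S.shape)
    (r : ℕ) (hr1 : 1 ≤ r) (hrn : r < n)
    (hswap : T.entry = swapEntry S.entry r)
    (hdom : domTab S T) (hne : S ≠ T) :
    ((qint xQ (1 + rhoTab κ S r) * qint xQ (1 + rhoTab κ T r)) /
        (qint xQ (rhoTab κ S r) * qint xQ (rhoTab κ T r)) =
      xQ * ∏ᶠ (e : ℕ) (_ : 2 ≤ e),
        (algebraMap (Polynomial ℚ) FFQ (Polynomial.cyclotomic e ℚ)) ^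
          (dExp e (content κ S r) (content κ S (r + 1)))) ∧
    ∀ e : ℕ, 2 ≤ e →
      dExp e (content κ S r) (content κ S (r + 1)) = degE e κ T - degE e κ S := by
  obtain ⟨k, rfl⟩ : ∃ k, r = k + 1 := ⟨r - 1, by omega⟩
  have hd : T.shape.diagram = S.shape.diagram := by rw [hshape]
  have hent : ∀ X, T.entry X = if S.entry X = k + 1 then k + 1 + 1 else
      if S.entry X = k + 1 + 1 then k + 1 else S.entry X := by
    intro X; rw [hswap]; rfl
  have mA := node_mem S (k := k+1) (by omega) (by omega)
  have mB := node_mem S (k := k+1+1) (by omega) (by omega)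
  have eA := node_entry S (k := k+1) (by omega) (by omega)
  have eB := node_entry S (k := k+1+1) (by omega) (by omega)
  have nTB : T.node (k+1) = S.node (k+1+1) := by
    apply node_eq T (by rw [hd]; exact mB)
    rw [hent, eB]; simp
  have nTA : T.node (k+1+1) = S.node (k+1) := by
    apply node_eq T (by rw [hd]; exact mA)
    rw [hent, eA]; simp
  have nTo : ∀ m, 1 ≤ m → m ≤ n → m ≠ k+1 → m ≠ k+1+1 → T.node m = S.node m := by
    intro m h1 h2 h3 h4
    apply node_eq T (by rw [hd]; exact node_mem S h1 h2)
    rw [hent, node_entry S h1 h2, if_neg h3, if_neg h4]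
  have rTo : ∀ m, m ≠ k+1 → restDiag T m = restDiag S m := by
    intro m h
    ext X
    simp only [restDiag, Set.mem_ofPred_eq, hd, hent]
    refine and_congr_right fun _ => ?_
    split_ifs <;> omega
  -- the three diagrams
  have hP : restDiag S (k+1) = restDiag S k ∪ {S.node (k+1)} := restDiag_succ S (by omega)
  have hP' : restDiag T (k+1) = restDiag S k ∪ {S.node (k+1+1)} := by
    rw [restDiag_succ T (by omega), nTB, rTo k (by omega)]
  have dP := restDiag_isDiagram S (k+1)
  have dP' := restDiag_isDiagram T (k+1)
  have adB := node_addable S (m := k+1) (by omega)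
  have adA := node_addable T (m := k+1) (by omega)
  rw [nTA] at adA
  have hQ : restDiag S (k+1+1) = restDiag S (k+1) ∪ {S.node (k+1+1)} := restDiag_succ S (by omega)
  have hQ' : restDiag S (k+1+1) = restDiag T (k+1) ∪ {S.node (k+1)} := by
    rw [← rTo (k+1+1) (by omega), restDiag_succ T (by omega), nTA]
  have nA : S.node (k+1) ∉ restDiag S k := node_notMem S (by omega)
  have nB : S.node (k+1+1) ∉ restDiag S k := fun h => by
    have := h.2; rw [eB] at this; omega
  have hfin : (restDiag S k).Finite := (restDiag_isDiagram S k).1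
  have cS : content κ S (k+1) = κ (S.node (k+1)).1 + ((S.node (k+1)).2.2 : ℤ) - ((S.node (k+1)).2.1 : ℤ) := rfl
  have cS' : content κ S (k+1+1) = κ (S.node (k+1+1)).1 + ((S.node (k+1+1)).2.2 : ℤ) - ((S.node (k+1+1)).2.1 : ℤ) := rfl
  have cT : content κ T (k+1) = content κ S (k+1+1) := by unfold content; rw [nTB]
  have cT' : content κ T (k+1+1) = content κ S (k+1) := by unfold content; rw [nTA]
  have hPA : S.node (k+1) ∈ restDiag S (k+1) := by rw [hP]; exact Or.inr rfl
  have hPB : S.node (k+1+1) ∈ restDiag T (k+1) := by rw [hP']; exact Or.inr rfl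
  have hsub : ∀ X ∈ restDiag T (k+1), X ≠ S.node (k+1+1) → X ∈ restDiag S (k+1) := by
    intro X hX hne'
    rw [hP'] at hX
    rw [hP]
    exact Or.inl (hX.resolve_right hne')
  have hsum : ∀ e, degE e κ T - degE e κ S =
      (dNode ℓ e κ (restDiag T (k+1)) (S.node (k+1+1)) - dNode ℓ e κ (restDiag S (k+1)) (S.node (k+1))) +
      (dNode ℓ e κ (restDiag S (k+1+1)) (S.node (k+1)) - dNode ℓ e κ (restDiag S (k+1+1)) (S.node (k+1+1))) := by
    intro e
    have hdeg : ∀ V : StdTableau ℓ n, degE e κ V = ∑ m ∈ Finset.Icc 1 n, dNode ℓ e κ (restDiag V m) (V.node m) :=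
      fun V => rfl
    rw [hdeg, hdeg, ← Finset.sum_sub_distrib,
      Finset.sum_eq_add_of_mem (k+1) (k+1+1) (by simp; omega) (by simp; omega) (by omega)]
    · rw [nTB, nTA, rTo (k+1+1) (by omega)]
    · intro m hm h
      rw [Finset.mem_Icc] at hm
      rw [rTo m h.1, nTo m hm.1 hm.2 h.1 h.2, sub_self]
  have hdomk := hdom (k+1)
  unfold rhoTab
  rw [cT, cT']
  simp only [hQ] at hsum hQ'
  have hQ2 := hQ'.symm
  generalize hAdef : S.node (k+1) = A at *
  generalize hBdef : S.node (k+1+1) = B at *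
  obtain ⟨a, b, c⟩ := A
  obtain ⟨l, p, q⟩ := B
  have hAnP' : (a, b, c) ∉ restDiag T (k+1) := adA.1
  have hBnP : (l, p, q) ∉ restDiag S (k+1) := adB.1
  -- A is strictly above B
  have hrow : a < l ∨ (a = l ∧ b < p) := by
    by_contra hcon
    have hlt : l < a ∨ (l = a ∧ p < b) := by
      by_contra hcon2
      obtain ⟨rfl, rfl⟩ : a = l ∧ b = p := by omega
      rcases le_total c q with h | h
      · exact hAnP' (diag_mono dP' hPB le_rfl h)
      · exact hBnP (diag_mono dP hPA le_rfl h)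
    have hh := hdomk l p
    rw [hP, hP'] at hh
    have s1 : {A | A ∈ restDiag S k ∪ {((l, p, q) : Node)} ∧ (A.1 < l ∨ A.1 = l ∧ A.2.1 ≤ p)} =
        insert (l, p, q) {A | A ∈ restDiag S k ∧ (A.1 < l ∨ A.1 = l ∧ A.2.1 ≤ p)} := by
      ext X
      simp only [Set.mem_ofPred_eq, Set.mem_union, Set.mem_singleton_iff, Set.mem_insert_iff]
      constructor
      · tauto
      · rintro (rfl | h)
        · simp
        · tauto
    have s2 : {A | A ∈ restDiag S k ∪ {((a, b, c) : Node)} ∧ (A.1 < l ∨ A.1 = l ∧ A.2.1 ≤ p)} =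
        {A | A ∈ restDiag S k ∧ (A.1 < l ∨ A.1 = l ∧ A.2.1 ≤ p)} := by
      ext X
      simp only [Set.mem_ofPred_eq, Set.mem_union, Set.mem_singleton_iff]
      constructor
      · rintro ⟨h | rfl, h2⟩
        · exact ⟨h, h2⟩
        · simp only at h2; omega
      · tauto
    rw [s1, s2, Set.ncard_insert_of_notMem (fun h => nB h.1) (hfin.subset fun X hX => hX.1)] at hh
    omega
  have hAB : a < l ∨ (a = l ∧ b < p ∧ q < c) := by
    rcases hrow with h | ⟨rfl, h⟩
    · exact Or.inl h
    · refine Or.inr ⟨rfl, h, ?_⟩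
      by_contra hcon
      exact hAnP' (diag_mono dP' hPB h.le (by omega))
  constructor
  · apply part1
    rw [cS, cS']
    simp only
    rcases hAB with h | ⟨rfl, h1, h2⟩
    · have g1 := kappa_gap n ℓ κ hκ a l h (adB.2.2.1 _ (Or.inr rfl))
      have g2 := hook_bound S (by omega) mA mB
      omega
    · omega
  · intro e he
    have q1 := dNode_add_above he κ dP dP' hsub hBnP adA hAB
    have q2 := dNode_add_below he κ dP hPA adB hAB
    rw [hQ2] at q1
    rw [hsum e, cS, cS', q1]
    exact q2.symm.trans (by ring)

end Paper
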